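/- Let X be a metric space, let U ⊆ X be a connected open set, let x ∈ U and ε > 0 be such that B(x, ε) ⊆ U and there exists a point y ∈ U with dist(x, y) ≥ ε, and let m ≥ 2 be a natural number. Define U(1) = U \ cl(B(x, ε/2)), U(k) = B(x, ε/(k−1)) \ cl(B(x, ε/(k+1))) for 1 < k < m, and U(m) = B(x, ε/(m−1)). Then each U(k) is nonempty, U(k) ∩ U(k+1) ≠ ∅ for every 1 ≤ k < m, and U(k) ∩ U(l) = ∅ whenever |k − l| ≥ 2. (Hence the nerve of the family {U(1), …, U(m)} is a segment subdivided into m − 1 parts, so if the replaced element U of a covering is connected, the nerve of the grating equals the nerve of the original covering with the vertex U replaced by this subdivided segment.) -/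

import Mathlib

/-- The `k`-th set of the grating of a covering element `U` with respect to the
4-tuple `{U, x, ε, m}`:
`U(1) = U \ cl(B(x, ε/2))`,
`U(k) = B(x, ε/(k−1)) \ cl(B(x, ε/(k+1)))` for `1 < k < m`, and
`U(m) = B(x, ε/(m−1))`. -/
def gratingSet {X : Type*} [MetricSpace X] (U : Set X) (x : X) (ε : ℝ) (m k : ℕ) :
    Set X :=
  if k = 1 then U \ closure (Metric.ball x (ε / 2))
  else if k = m then Metric.ball x (ε / (m - 1 : ℕ))
  else Metric.ball x (ε / (k - 1 : ℕ)) \ closure (Metric.ball x (ε / (k + 1 : ℕ)))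

/-!
On a connected set containing `x`, the distance to `x` takes every value between `0` and any
distance it attains. A point of `U` whose distance to `x` lies strictly between `ε / (k + 1)` and
`ε / k` belongs to both `U(k)` and `U(k + 1)`. For `k + 2 ≤ l`, on the other hand, `U(l)` lies in
the ball of radius `ε / (l - 1) ≤ ε / (k + 1)`, which `U(k)` avoids.
-/

section PseudoMetricSpace

variable {X : Type*} [PseudoMetricSpace X] {U : Set X} {x y z : X} {r : ℝ}

theorem notMem_closure_ball_of_lt_dist (h : r < dist z x) : z ∉ closure (Metric.ball x r) :=
  fun hz ↦ h.not_ge (Metric.closure_ball_subset_closedBall hz)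

theorem exists_mem_dist_eq_of_isPreconnected (hU : IsPreconnected U) (hx : x ∈ U) (hy : y ∈ U)
    (hr : 0 ≤ r) (hry : r ≤ dist y x) : ∃ z ∈ U, dist z x = r :=
  hU.intermediate_value hx hy (continuous_id.dist continuous_const).continuousOn
    ⟨(dist_self x).trans_le hr, hry⟩

end PseudoMetricSpace

section GratingSet

variable {X : Type*} [MetricSpace X] {U : Set X} {x y z : X} {ε : ℝ} {m k l : ℕ}

theorem gratingSet_subset_ball (hk : k ≠ 1) :
    gratingSet U x ε m k ⊆ Metric.ball x (ε / (k - 1 : ℕ)) := by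
  rw [gratingSet, if_neg hk]
  split_ifs with hkm
  · rw [hkm]
  · exact Set.sdiff_subset

theorem disjoint_gratingSet_closure_ball (hk : k ≠ m) :
    Disjoint (gratingSet U x ε m k) (closure (Metric.ball x (ε / (k + 1 : ℕ)))) := by
  unfold gratingSet
  split_ifs with hk_one
  · simpa only [hk_one, one_add_one_eq_two, Nat.cast_ofNat] using Set.disjoint_sdiff_left
  · exact Set.disjoint_sdiff_left

theorem disjoint_gratingSet (hε : 0 ≤ ε) (hkl : k + 2 ≤ l) (hk : k ≠ m) :
    Disjoint (gratingSet U x ε m k) (gratingSet U x ε m l) := by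
  have radius_le : ε / (l - 1 : ℕ) ≤ ε / (k + 1 : ℕ) := by
    gcongr
    omega
  exact (disjoint_gratingSet_closure_ball hk).mono_right <|
    (gratingSet_subset_ball (by omega)).trans <|
      (Metric.ball_subset_ball radius_le).trans subset_closure

theorem mem_gratingSet_of_dist (hz : z ∈ U) (hlower : ε / (k + 1 : ℕ) < dist z x)
    (hupper : k ≠ 1 → dist z x < ε / (k - 1 : ℕ)) : z ∈ gratingSet U x ε m k := by
  have hz_outside := notMem_closure_ball_of_lt_dist hlower
  unfold gratingSet
  split_ifs with hk_one hkm
  · rw [hk_one, one_add_one_eq_two, Nat.cast_ofNat] at hz_outside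
    exact ⟨hz, hz_outside⟩
  · exact hkm ▸ hupper hk_one
  · exact ⟨hupper hk_one, hz_outside⟩

theorem mem_gratingSet_inter_succ_of_dist (hε : 0 ≤ ε) (hk : 1 ≤ k) (hz : z ∈ U)
    (hlower : ε / (k + 1 : ℕ) < dist z x) (hupper : dist z x < ε / k) :
    z ∈ gratingSet U x ε m k ∩ gratingSet U x ε m (k + 1) := by
  constructor
  · refine mem_gratingSet_of_dist hz hlower fun hk_ne_one ↦ hupper.trans_le ?_
    have : 0 < k - 1 := by omega
    gcongr
    exact k.sub_le 1
  · refine mem_gratingSet_of_dist hz (lt_of_le_of_lt ?_ hlower) fun _ ↦ hupper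
    gcongr
    exact k.le_succ

theorem gratingSet_inter_succ_nonempty (hU : IsPreconnected U) (hx : x ∈ U) (hε : 0 < ε)
    (hy : y ∈ U) (hxy : ε ≤ dist x y) (hk : 1 ≤ k) :
    (gratingSet U x ε m k ∩ gratingSet U x ε m (k + 1)).Nonempty := by
  have radius_lt : ε / (k + 1 : ℕ) < ε / k := by
    gcongr
    exact k.lt_succ_self
  obtain ⟨r, hr_lower, hr_upper⟩ := exists_between radius_lt
  have r_nonneg : 0 ≤ r := le_trans (by positivity) hr_lower.le
  have r_le_dist : r ≤ dist y x :=
    calc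
      r ≤ ε / k := hr_upper.le
      _ ≤ ε := div_le_self hε.le (mod_cast hk)
      _ ≤ dist y x := dist_comm x y ▸ hxy
  obtain ⟨z, hz, rfl⟩ := exists_mem_dist_eq_of_isPreconnected hU hx hy r_nonneg r_le_dist
  exact ⟨z, mem_gratingSet_inter_succ_of_dist hε.le hk hz hr_lower hr_upper⟩

end GratingSet

theorem grating_nerve_of_connected_general {X : Type*} [MetricSpace X]
    {U : Set X} (hU : IsPreconnected U) {x : X} (hx : x ∈ U) {ε : ℝ} (hε : 0 < ε)
    (hfar : ∃ y ∈ U, ε ≤ dist x y) (m : ℕ) :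
    (∀ k, 1 ≤ k → k ≤ m → (gratingSet U x ε m k).Nonempty) ∧
    (∀ k, 1 ≤ k → k < m → (gratingSet U x ε m k ∩ gratingSet U x ε m (k + 1)).Nonempty) ∧
    (∀ k l, 1 ≤ k → k ≤ m → 1 ≤ l → l ≤ m → 2 ≤ |(k : ℤ) - (l : ℤ)| →
      gratingSet U x ε m k ∩ gratingSet U x ε m l = ∅) := by
  obtain ⟨y, hy, hxy⟩ := hfar
  have consecutive_meet (k : ℕ) (hk : 1 ≤ k) :
      (gratingSet U x ε m k ∩ gratingSet U x ε m (k + 1)).Nonempty :=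
    gratingSet_inter_succ_nonempty hU hx hε hy hxy hk
  refine ⟨fun k hk _ ↦ (consecutive_meet k hk).left, fun k hk _ ↦ consecutive_meet k hk, ?_⟩
  intro k l _ hkm _ hlm hkl
  rw [← Set.disjoint_iff_inter_eq_empty]
  rcases le_abs.mp hkl with hlk | hkl
  · exact (disjoint_gratingSet hε.le (by omega) (by omega)).symm
  · exact disjoint_gratingSet hε.le (by omega) (by omega)

/-- **The nerve of the grating sets of a connected element is a subdivided segment.**
If `U` is a connected open set in a metric space, `x ∈ U`, `ε > 0` with `B(x, ε) ⊆ U`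
and some point of `U` lies at distance `≥ ε` from `x`, and `m ≥ 2`, then each grating
set `U(k)` (`1 ≤ k ≤ m`) is nonempty, consecutive grating sets intersect, and
`U(k) ∩ U(l) = ∅` whenever `|k − l| ≥ 2`; hence the nerve of `{U(1), …, U(m)}` is a
segment subdivided into `m − 1` parts. -/
theorem grating_nerve_of_connected {X : Type*} [MetricSpace X]
    (U : Set X) (hUopen : IsOpen U) (hUconn : IsConnected U)
    (x : X) (hx : x ∈ U) (ε : ℝ) (hε : 0 < ε)
    (hball : Metric.ball x ε ⊆ U)
    (hfar : ∃ y ∈ U, ε ≤ dist x y)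
    (m : ℕ) (hm : 2 ≤ m) :
    (∀ k, 1 ≤ k → k ≤ m → (gratingSet U x ε m k).Nonempty) ∧
    (∀ k, 1 ≤ k → k < m → (gratingSet U x ε m k ∩ gratingSet U x ε m (k + 1)).Nonempty) ∧
    (∀ k l, 1 ≤ k → k ≤ m → 1 ≤ l → l ≤ m → 2 ≤ |(k : ℤ) - (l : ℤ)| →
      gratingSet U x ε m k ∩ gratingSet U x ε m l = ∅) :=
  grating_nerve_of_connected_general hUconn.isPreconnected hx hε hfar m
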